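/- arXiv:math/0108043 — 3 statements merged into one kernel-verified Lean document; each statement's English description precedes it below -/
import Mathlib

section
/- Let x ∈ ℝ with 0 < x < 1/4 and let E ∈ ℝ. Define a sequence of real numbers by r_0 = E and r_{m+1} = 1/(1 − x·r_m). Assume that 1 − x·r_m ≠ 0 for every m ≥ 0, and that E ≠ (1 + √(1−4x))/(2x). Then the sequence r_m converges, as m → ∞, to (1 − √(1−4x))/(2x). -/
open Filter

/-!
The fixed points of `z ↦ 1 / (1 - x * z)` are the solutions `c` of `c * (1 - x * c) = 1`. If `a` and
`b` are two of them, then the Möbius coordinate `(z - a) / (z - b)` turns the map into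
multiplication by `a / b`. When `‖a‖ < ‖b‖` the coordinates of the iterates therefore tend
geometrically to `0`, which means that the iterates tend to `a`.
-/

section FixedPoints

variable {K : Type*} [Field K] {x a b c s z : K} {r : ℕ → K}

theorem one_div_one_sub_mul_sub_fixedPoint (hc : c * (1 - x * c) = 1) (hz : 1 - x * z ≠ 0) :
    1 / (1 - x * z) - c = x * c * (z - c) / (1 - x * z) := by
  rw [div_sub' hz]
  congr 1
  linear_combination -hc

theorem fixedPoint_of_sq_eq_discrim (h2 : (2 : K) ≠ 0) (hx : x ≠ 0) (hs : s ^ 2 = 1 - 4 * x) :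
    (1 + s) / (2 * x) * (1 - x * ((1 + s) / (2 * x))) = 1 := by
  field_simp
  linear_combination -hs

theorem iterate_ne_fixedPoint (hx : x ≠ 0) (hc : c * (1 - x * c) = 1)
    (hr : ∀ m, r (m + 1) = 1 / (1 - x * r m)) (hne : ∀ m, 1 - x * r m ≠ 0) (h0 : r 0 ≠ c)
    (m : ℕ) : r m ≠ c := by
  have hc0 : c ≠ 0 := left_ne_zero_of_mul_eq_one hc
  induction m with
  | zero => exact h0
  | succ m ih =>
    rw [← sub_ne_zero, hr, one_div_one_sub_mul_sub_fixedPoint hc (hne m)]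
    exact div_ne_zero (mul_ne_zero (mul_ne_zero hx hc0) (sub_ne_zero.mpr ih)) (hne m)

theorem iterate_sub_div_sub_eq_pow_mul (hx : x ≠ 0) (ha : a * (1 - x * a) = 1)
    (hb : b * (1 - x * b) = 1) (hr : ∀ m, r (m + 1) = 1 / (1 - x * r m))
    (hne : ∀ m, 1 - x * r m ≠ 0) (m : ℕ) :
    (r m - a) / (r m - b) = (a / b) ^ m * ((r 0 - a) / (r 0 - b)) := by
  induction m with
  | zero => rw [pow_zero, one_mul]
  | succ m ih =>
    calc (r (m + 1) - a) / (r (m + 1) - b)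
        = x * a * (r m - a) / (x * b * (r m - b)) := by
          rw [hr, one_div_one_sub_mul_sub_fixedPoint ha (hne m),
            one_div_one_sub_mul_sub_fixedPoint hb (hne m), div_div_div_cancel_right₀ (hne m)]
      _ = a / b * ((r m - a) / (r m - b)) := by
          rw [mul_div_mul_comm, mul_div_mul_left _ _ hx]
      _ = (a / b) ^ (m + 1) * ((r 0 - a) / (r 0 - b)) := by
          rw [ih, pow_succ', mul_assoc]

end FixedPoints

theorem tendsto_of_tendsto_sub_div_sub_zero {ι 𝕜 : Type*} [NormedField 𝕜] {l : Filter ι}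
    {f : ι → 𝕜} {a b : 𝕜} (hab : a ≠ b) (hf : ∀ i, f i ≠ b)
    (h : Tendsto (fun i => (f i - a) / (f i - b)) l (nhds 0)) : Tendsto f l (nhds a) := by
  have inverse_coordinate (i : ι) :
      b + (a - b) / (1 - (f i - a) / (f i - b)) = f i := by
    have hfb : f i - b ≠ 0 := sub_ne_zero.mpr (hf i)
    have hsub : 1 - (f i - a) / (f i - b) = (a - b) / (f i - b) := by
      rw [one_sub_div hfb, sub_sub_sub_cancel_left]
    rw [hsub, div_div_cancel₀ (sub_ne_zero.mpr hab), add_sub_cancel]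
  have hlim : Tendsto (fun i => b + (a - b) / (1 - (f i - a) / (f i - b))) l
      (nhds (b + (a - b) / (1 - 0))) :=
    (tendsto_const_nhds.div (h.const_sub 1) (by simp)).const_add b
  simpa only [inverse_coordinate, sub_zero, div_one, add_sub_cancel] using hlim

theorem tendsto_fixedPoint_of_norm_lt {𝕜 : Type*} [NormedField 𝕜] {x a b : 𝕜} {r : ℕ → 𝕜}
    (ha : a * (1 - x * a) = 1) (hb : b * (1 - x * b) = 1) (hab : ‖a‖ < ‖b‖)
    (hr : ∀ m, r (m + 1) = 1 / (1 - x * r m)) (hne : ∀ m, 1 - x * r m ≠ 0) (h0 : r 0 ≠ b) :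
    Tendsto r atTop (nhds a) := by
  have a_ne_b : a ≠ b := ne_of_apply_ne norm hab.ne
  have hx : x ≠ 0 := by
    rintro rfl
    simp only [zero_mul, sub_zero, mul_one] at ha hb
    exact a_ne_b (ha.trans hb.symm)
  have norm_ratio_lt_one : ‖a / b‖ < 1 := by
    rw [norm_div]
    exact (div_lt_one ((norm_nonneg a).trans_lt hab)).mpr hab
  refine tendsto_of_tendsto_sub_div_sub_zero a_ne_b (iterate_ne_fixedPoint hx hb hr hne h0) ?_
  have hlim : Tendsto (fun m => (a / b) ^ m * ((r 0 - a) / (r 0 - b))) atTop (nhds 0) := by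
    simpa only [zero_mul] using
      (tendsto_pow_atTop_nhds_zero_of_norm_lt_one norm_ratio_lt_one).mul_const
        ((r 0 - a) / (r 0 - b))
  exact hlim.congr fun m => (iterate_sub_div_sub_eq_pow_mul hx ha hb hr hne m).symm

theorem norm_one_sub_lt_norm_one_add {s : ℝ} (hs : 0 < s) : ‖1 - s‖ < ‖1 + s‖ :=
  sq_lt_sq.mp (by linarith)

theorem stmt2_general {𝕜 : Type*} [NormedField 𝕜] {x s : 𝕜} (hx : x ≠ 0)
    (hs : s ^ 2 = 1 - 4 * x) (hlt : ‖1 - s‖ < ‖1 + s‖) {r : ℕ → 𝕜}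
    (hr : ∀ m, r (m + 1) = 1 / (1 - x * r m)) (hne : ∀ m, 1 - x * r m ≠ 0)
    (h0 : r 0 ≠ (1 + s) / (2 * x)) :
    Tendsto r atTop (nhds ((1 - s) / (2 * x))) := by
  -- In characteristic two `1 - s = 1 + s`, against `hlt`.
  have h2 : (2 : 𝕜) ≠ 0 := fun h => hlt.ne (congrArg norm (by linear_combination -s * h))
  have ha : (1 - s) / (2 * x) * (1 - x * ((1 - s) / (2 * x))) = 1 := by
    simpa only [sub_eq_add_neg] using
      fixedPoint_of_sq_eq_discrim h2 hx ((neg_sq s).trans hs)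
  have hb := fixedPoint_of_sq_eq_discrim h2 hx hs
  have hab : ‖(1 - s) / (2 * x)‖ < ‖(1 + s) / (2 * x)‖ := by
    rw [norm_div, norm_div]
    exact div_lt_div_of_pos_right hlt (norm_pos_iff.mpr (mul_ne_zero h2 hx))
  exact tendsto_fixedPoint_of_norm_lt ha hb hab hr hne h0

/-- For `0 < x < 1/4`, the continued-fraction iterates
`r 0 = E`, `r (m+1) = 1/(1 - x·r m)` converge to `(1 - √(1-4x))/(2x)`, provided all
denominators are nonzero and `E` is not the other fixed point `(1 + √(1-4x))/(2x)`. -/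
theorem stmt2 (x E : ℝ) (hx0 : 0 < x) (hx1 : x < 1 / 4)
    (r : ℕ → ℝ) (hr0 : r 0 = E)
    (hrsucc : ∀ m : ℕ, r (m + 1) = 1 / (1 - x * r m))
    (hne : ∀ m : ℕ, 1 - x * r m ≠ 0)
    (hE : E ≠ (1 + Real.sqrt (1 - 4 * x)) / (2 * x)) :
    Tendsto r atTop (nhds ((1 - Real.sqrt (1 - 4 * x)) / (2 * x))) := by
  have hdisc : 0 < 1 - 4 * x := by linarith
  exact stmt2_general hx0.ne' (Real.sq_sqrt hdisc.le)
    (norm_one_sub_lt_norm_one_add (Real.sqrt_pos.mpr hdisc)) hrsucc hne (hr0 ▸ hE)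
end

section
/- Let k ≥ 2 and let T' be a finite set of patterns in S_{k−1}. For each τ' ∈ T' let τ'⁺ ∈ S_k be the pattern obtained by appending k at the end, i.e. τ'⁺(i) = τ'(i) for i < k and τ'⁺(k) = k, and set T = {τ'⁺ : τ' ∈ T'}. Let F_T(X) = Σ_{n≥0} |{π ∈ S_n : π avoids 132 and every pattern in T}|·Xⁿ and F_{T'}(X) = Σ_{n≥0} |{π ∈ S_n : π avoids 132 and every pattern in T'}|·Xⁿ, as formal power series in ℚ⟦X⟧. Then F_T(X)·(1 − X·F_{T'}(X)) = 1. -/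
/-- A pattern is a permutation of `{1,…,k}` for some `k`. -/
def Pattern : Type := Σ k : ℕ, Equiv.Perm (Fin k)

/-- `IsOccurrence τ π f` says that the strictly increasing tuple of indices `f` is an
occurrence of the pattern `τ` in the permutation `π`, i.e. `π ∘ f` is order-isomorphic
to `τ`. -/
def IsOccurrence {k n : ℕ} (τ : Equiv.Perm (Fin k)) (π : Equiv.Perm (Fin n))
    (f : Fin k → Fin n) : Prop :=
  StrictMono f ∧ ∀ a b : Fin k, τ a < τ b ↔ π (f a) < π (f b)

/-- `π` contains the pattern `τ` (at least once). -/
def Contains {k n : ℕ} (τ : Equiv.Perm (Fin k)) (π : Equiv.Perm (Fin n)) : Prop :=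
  ∃ f : Fin k → Fin n, IsOccurrence τ π f

/-- `π` contains the pattern `τ` exactly once. -/
def ContainsOnce {k n : ℕ} (τ : Equiv.Perm (Fin k)) (π : Equiv.Perm (Fin n)) : Prop :=
  ∃! f : Fin k → Fin n, IsOccurrence τ π f

/-- `π` avoids every pattern in the set `T`. -/
def AvoidsSet {n : ℕ} (T : Set Pattern) (π : Equiv.Perm (Fin n)) : Prop :=
  ∀ p ∈ T, ¬ Contains p.2 π

/-- `f_T(n)`: the number of permutations of `{1,…,n}` avoiding every pattern in `T`. -/
noncomputable def avoidCount (T : Set Pattern) (n : ℕ) : ℕ :=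
  Nat.card {π : Equiv.Perm (Fin n) // AvoidsSet T π}

/-- The pattern `132 ∈ S₃` (zero-indexed: `0 ↦ 0, 1 ↦ 2, 2 ↦ 1`). -/
noncomputable def p132 : Equiv.Perm (Fin 3) := Equiv.ofBijective ![0, 2, 1] (by decide)

open PowerSeries

/-- Append a largest fixed point at the end: `appendTop τ` agrees with `τ` on the first
`m` letters and sends the last letter `m+1` to itself. -/
noncomputable def appendTop {m : ℕ} (τ : Equiv.Perm (Fin m)) : Equiv.Perm (Fin (m + 1)) :=
  finSuccEquivLast.symm.permCongr τ.optionCongr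

/-!
Write `σ ⊕ 1` for `appendTop σ` and `α ⊖ β` for the skew sum. A nonempty `132`-avoiding permutation
is uniquely of the form `(σ ⊕ 1) ⊖ ρ`: every letter before the maximum exceeds every letter after
it, since otherwise these two letters and the maximum form `132`. Both `132` and `τ ⊕ 1` are
skew-indecomposable, so they occur in `(σ ⊕ 1) ⊖ ρ` iff they occur in `σ ⊕ 1` or in `ρ`; moreover
`σ ⊕ 1` contains `132` iff `σ` does, and contains `τ ⊕ 1` iff `σ` contains `τ`. Hence
`F_T = 1 + X F_{T'} F_T`.
-/

open Equiv

section Occurrence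

variable {k l n : ℕ} {τ : Perm (Fin k)} {α : Perm (Fin l)} {π : Perm (Fin n)}

theorem IsOccurrence.comp_iff {g : Fin l → Fin n} (hg : IsOccurrence α π g) {f : Fin k → Fin l} :
    IsOccurrence τ π (g ∘ f) ↔ IsOccurrence τ α f := by
  simp only [IsOccurrence, StrictMono, Function.comp_apply, hg.1.lt_iff_lt, ← hg.2]

theorem IsOccurrence.contains_of_contains {g : Fin l → Fin n} (hg : IsOccurrence α π g)
    (h : Contains τ α) : Contains τ π :=
  h.imp' (g ∘ ·) fun _ hf => hg.comp_iff.2 hf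

theorem IsOccurrence.contains_of_range_subset {g : Fin l → Fin n} (hg : IsOccurrence α π g)
    {f : Fin k → Fin n} (hf : IsOccurrence τ π f) (hfg : Set.range f ⊆ Set.range g) :
    Contains τ α := by
  obtain ⟨f, rfl⟩ := Set.range_subset_range_iff_exists_comp.1 hfg
  exact ⟨f, hg.comp_iff.1 hf⟩

theorem contains_p132_of_lt {a b c : Fin n} (hab : a < b) (hbc : b < c) (hac : π a < π c)
    (hcb : π c < π b) : Contains p132 π := by
  refine ⟨![a, b, c], ?_, fun x y => ?_⟩
  · simp [Fin.strictMono_iff_lt_succ, Fin.forall_fin_two, hab, hbc]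
  · have hπab := hac.trans hcb
    fin_cases x <;> fin_cases y <;> simp [p132, hac, hcb, hπab, hac.le, hcb.le, hπab.le]

end Occurrence

section AppendTop

variable {k m : ℕ}

theorem appendTop_castSucc (τ : Perm (Fin m)) (a : Fin m) :
    appendTop τ a.castSucc = (τ a).castSucc := by
  simp [appendTop, permCongr_apply]

theorem appendTop_last (τ : Perm (Fin m)) : appendTop τ (Fin.last m) = Fin.last m := by
  simp [appendTop, permCongr_apply]

theorem appendTop_injective : Function.Injective (appendTop (m := m)) :=
  (permCongr _).injective.comp optionCongr_injective

theorem exists_appendTop_eq {π : Perm (Fin (m + 1))} (h : π (Fin.last m) = Fin.last m) :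
    ∃ σ, appendTop σ = π := by
  refine ⟨removeNone (finSuccEquivLast.permCongr π), ?_⟩
  have hnone : finSuccEquivLast.permCongr π none = none := by simp [permCongr_apply, h]
  rw [appendTop, map_equiv_removeNone, hnone, swap_self]
  ext
  simp [permCongr_apply]

theorem isOccurrence_appendTop (σ : Perm (Fin m)) :
    IsOccurrence σ (appendTop σ) Fin.castSucc :=
  ⟨Fin.strictMono_castSucc, by simp [appendTop_castSucc]⟩

theorem contains_of_isOccurrence_appendTop {τ : Perm (Fin k)} {σ : Perm (Fin m)}
    {f : Fin k → Fin (m + 1)} (hf : IsOccurrence τ (appendTop σ) f)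
    (hlast : ∀ x, f x ≠ Fin.last m) : Contains τ σ :=
  (isOccurrence_appendTop σ).contains_of_range_subset hf <|
    Set.range_subset_iff.2 fun x => Fin.exists_castSucc_eq.2 (hlast x)

theorem contains_appendTop_iff_of_last_ne {τ : Perm (Fin (k + 1))} {σ : Perm (Fin m)}
    (hτ : τ (Fin.last k) ≠ Fin.last k) : Contains τ (appendTop σ) ↔ Contains τ σ := by
  refine ⟨fun ⟨f, hf⟩ => contains_of_isOccurrence_appendTop hf fun x hx => ?_,
    (isOccurrence_appendTop σ).contains_of_contains⟩
  have hf_last : f (Fin.last k) = Fin.last m :=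
    le_antisymm (Fin.le_last _) (hx ▸ hf.1.monotone (Fin.le_last x))
  have hmax : ¬ τ (Fin.last k) < τ (τ.symm (Fin.last k)) := by
    rw [hf.2, hf_last, appendTop_last]
    exact (Fin.le_last _).not_gt
  exact hτ (le_antisymm (Fin.le_last _) (by simpa using hmax))

theorem IsOccurrence.snoc_appendTop {τ : Perm (Fin k)} {σ : Perm (Fin m)} {f : Fin k → Fin m}
    (hf : IsOccurrence τ σ f) :
    IsOccurrence (appendTop τ) (appendTop σ)
      (Fin.snoc (α := fun _ => Fin (m + 1)) (Fin.castSucc ∘ f) (Fin.last m)) := by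
  constructor
  · intro a b hab
    induction b using Fin.lastCases <;> induction a using Fin.lastCases <;>
      simp_all [hf.1.lt_iff_lt, Fin.castSucc_lt_last, (Fin.le_last _).not_gt]
  · intro a b
    induction b using Fin.lastCases <;> induction a using Fin.lastCases <;>
      simp [appendTop_castSucc, appendTop_last, Fin.castSucc_lt_last, (Fin.le_last _).not_gt, hf.2]

theorem contains_appendTop_appendTop_iff {τ : Perm (Fin k)} {σ : Perm (Fin m)} :
    Contains (appendTop τ) (appendTop σ) ↔ Contains τ σ := by
  refine ⟨fun ⟨f, hf⟩ => ?_, fun ⟨f, hf⟩ => ⟨_, hf.snoc_appendTop⟩⟩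
  refine contains_of_isOccurrence_appendTop (hf.comp_iff.2 (isOccurrence_appendTop τ)) fun x => ?_
  exact ((hf.1 x.castSucc_lt_last).trans_le (Fin.le_last _)).ne

end AppendTop

section SkewSum

variable {a b k : ℕ}

/-- The values of a skew sum `α ⊖ β` of permutations of lengths `a` and `b`, split into the values
taken on `α` (the upper block) and those taken on `β` (the lower block). -/
def skewSumValues (a b : ℕ) : Fin a ⊕ Fin b ≃ Fin (a + b) :=
  (sumComm _ _).trans (finSumFinEquiv.trans (finCongr (Nat.add_comm b a)))

/-- The skew sum `α ⊖ β`: the letters of `α`, raised above those of `β`, followed by the letters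
of `β`. -/
def skewSum (α : Perm (Fin a)) (β : Perm (Fin b)) : Perm (Fin (a + b)) :=
  finSumFinEquiv.equivCongr (skewSumValues a b) (Perm.sumCongr α β)

theorem skewSum_castAdd (α : Perm (Fin a)) (β : Perm (Fin b)) (x : Fin a) :
    (skewSum α β (Fin.castAdd b x) : ℕ) = b + α x := by
  simp [skewSum, skewSumValues, Nat.add_comm]

theorem skewSum_natAdd (α : Perm (Fin a)) (β : Perm (Fin b)) (y : Fin b) :
    (skewSum α β (Fin.natAdd a y) : ℕ) = β y := by
  simp [skewSum, skewSumValues]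

theorem skewSum_natAdd_lt_castAdd (α : Perm (Fin a)) (β : Perm (Fin b)) (x : Fin a) (y : Fin b) :
    skewSum α β (Fin.natAdd a y) < skewSum α β (Fin.castAdd b x) := by
  rw [Fin.lt_def, skewSum_castAdd, skewSum_natAdd]
  omega

theorem skewSum_inj {α α' : Perm (Fin a)} {β β' : Perm (Fin b)} :
    skewSum α β = skewSum α' β' ↔ α = α' ∧ β = β' := by
  rw [skewSum, skewSum, EmbeddingLike.apply_eq_iff_eq, ← Prod.mk_inj]
  exact Perm.sumCongrHom_injective.eq_iff (a := (α, β)) (b := (α', β'))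

theorem le_apply_castAdd_of_forall_lt {π : Perm (Fin (a + b))}
    (h : ∀ x y, π (Fin.natAdd a y) < π (Fin.castAdd b x)) (x : Fin a) :
    b ≤ π (Fin.castAdd b x) := by
  have hsub : Finset.univ.map ((Fin.natAddEmb a).trans π.toEmbedding) ⊆
      Finset.Iio (π (Fin.castAdd b x)) := by
    intro v hv
    obtain ⟨y, -, rfl⟩ := Finset.mem_map.1 hv
    exact Finset.mem_Iio.2 (h x y)
  simpa using Finset.card_le_card hsub

theorem exists_skewSum_eq {π : Perm (Fin (a + b))}
    (h : ∀ x y, π (Fin.natAdd a y) < π (Fin.castAdd b x)) : ∃ α β, skewSum α β = π := by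
  obtain ⟨κ, rfl⟩ := (finSumFinEquiv.equivCongr (skewSumValues a b)).surjective π
  have hinl : Set.MapsTo κ (Set.range Sum.inl) (Set.range Sum.inl) := by
    rintro _ ⟨x, rfl⟩
    have hx := le_apply_castAdd_of_forall_lt h x
    rcases hκ : κ (Sum.inl x) with x' | y
    · exact ⟨x', rfl⟩
    · have hy : (finSumFinEquiv.equivCongr (skewSumValues a b) κ (Fin.castAdd b x) : ℕ) = y := by
        simp [skewSumValues, hκ]
      omega
  obtain ⟨⟨α, β⟩, rfl⟩ := Perm.mem_sumCongrHom_range_of_perm_mapsTo_inl hinl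
  exact ⟨α, β, rfl⟩

theorem isOccurrence_skewSum_left (α : Perm (Fin a)) (β : Perm (Fin b)) :
    IsOccurrence α (skewSum α β) (Fin.castAdd b) := by
  refine ⟨Fin.strictMono_castAdd b, fun x y => ?_⟩
  rw [Fin.lt_def, Fin.lt_def, skewSum_castAdd, skewSum_castAdd, Nat.add_lt_add_iff_left]

theorem isOccurrence_skewSum_right (α : Perm (Fin a)) (β : Perm (Fin b)) :
    IsOccurrence β (skewSum α β) (Fin.natAdd a) := by
  refine ⟨Fin.strictMono_natAdd a, fun x y => ?_⟩
  rw [Fin.lt_def, Fin.lt_def, skewSum_natAdd, skewSum_natAdd]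

/-- `τ` is not a skew sum of two nonempty permutations: in every splitting of its positions into a
nonempty initial part `s` and a nonempty final part, some letter of the initial part is smaller
than some letter of the final part. -/
def SkewIndecomposable (τ : Perm (Fin k)) : Prop :=
  ∀ s : Set (Fin k), IsLowerSet s → s.Nonempty → sᶜ.Nonempty → ∃ x ∈ s, ∃ y ∈ sᶜ, τ x < τ y

theorem skewIndecomposable_appendTop (τ : Perm (Fin k)) : SkewIndecomposable (appendTop τ) := by
  rintro s hs ⟨x, hx⟩ ⟨y, hy⟩
  have hlast : Fin.last k ∉ s := fun h => hy (hs (Fin.le_last y) h)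
  obtain ⟨x, rfl⟩ := Fin.exists_castSucc_eq.2 (ne_of_mem_of_not_mem hx hlast)
  refine ⟨_, hx, _, hlast, ?_⟩
  rw [appendTop_castSucc, appendTop_last]
  exact Fin.castSucc_lt_last _

theorem skewIndecomposable_p132 : SkewIndecomposable p132 := by
  rintro s hs ⟨x, hx⟩ ⟨y, hy⟩
  have hzero : 0 ∈ s := hs (Fin.zero_le x) hx
  have hp0 : p132 0 = 0 := rfl
  refine ⟨0, hzero, y, hy, ?_⟩
  rw [hp0, Fin.pos_iff_ne_zero, ← hp0]
  exact p132.injective.ne (ne_of_mem_of_not_mem hzero hy).symm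

theorem SkewIndecomposable.contains_skewSum_iff {τ : Perm (Fin k)} (hτ : SkewIndecomposable τ)
    {α : Perm (Fin a)} {β : Perm (Fin b)} :
    Contains τ (skewSum α β) ↔ Contains τ α ∨ Contains τ β := by
  refine ⟨fun ⟨f, hf⟩ => ?_, Or.rec (isOccurrence_skewSum_left α β).contains_of_contains
    (isOccurrence_skewSum_right α β).contains_of_contains⟩
  have hleft {x} (hx : (f x : ℕ) < a) : f x ∈ Set.range (Fin.castAdd b) :=
    ⟨(f x).castLT hx, rfl⟩
  have hright {x} (hx : ¬ (f x : ℕ) < a) : f x ∈ Set.range (Fin.natAdd a) :=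
    ⟨⟨f x - a, by omega⟩, Fin.ext (Nat.add_sub_of_le (not_lt.1 hx))⟩
  let s : Set (Fin k) := {x | (f x : ℕ) < a}
  have hs : IsLowerSet s := fun x y hyx hx => (Fin.le_def.1 (hf.1.monotone hyx)).trans_lt hx
  by_contra! hcontra
  have hs_nonempty : s.Nonempty := by
    by_contra hempty
    exact hcontra.2 <| (isOccurrence_skewSum_right α β).contains_of_range_subset hf <|
      Set.range_subset_iff.2 fun x => hright fun hx => hempty ⟨x, hx⟩
  have hsc_nonempty : sᶜ.Nonempty := by
    by_contra hempty
    exact hcontra.1 <| (isOccurrence_skewSum_left α β).contains_of_range_subset hf <|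
      Set.range_subset_iff.2 fun x => hleft (not_not.1 fun hx => hempty ⟨x, hx⟩)
  obtain ⟨x, hx, y, hy, hxy⟩ := hτ s hs hs_nonempty hsc_nonempty
  obtain ⟨x', hx'⟩ := hleft hx
  obtain ⟨y', hy'⟩ := hright hy
  refine (skewSum_natAdd_lt_castAdd α β x' y').not_gt ?_
  rw [hx', hy', ← hf.2]
  exact hxy

end SkewSum

section Decomposition

variable {i j : ℕ}

theorem apply_lt_apply_of_le_max_of_max_lt {n : ℕ} {π : Perm (Fin n)} (hπ : ¬ Contains p132 π)
    {top x y : Fin n} (hmax : ∀ q, π q ≤ π top) (hx : x ≤ top) (hy : top < y) : π y < π x := by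
  have hy_top : π y < π top := (hmax y).lt_of_ne (π.injective.ne hy.ne')
  rcases hx.eq_or_lt with rfl | hx
  · exact hy_top
  · by_contra! hle
    have hxy : π x < π y := hle.lt_of_ne (π.injective.ne (hx.trans hy).ne)
    exact hπ (contains_p132_of_lt hx hy hxy hy_top)

theorem exists_skewSum_appendTop_eq {π : Perm (Fin (i + 1 + j))} (hπ : ¬ Contains p132 π)
    (hmax : ∀ q, π q ≤ π (Fin.castAdd j (Fin.last i))) :
    ∃ σ ρ, skewSum (appendTop σ) ρ = π := by
  have hblocks (x : Fin (i + 1)) (y : Fin j) :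
      π (Fin.natAdd (i + 1) y) < π (Fin.castAdd j x) :=
    apply_lt_apply_of_le_max_of_max_lt hπ hmax (Fin.le_last x)
      (Fin.lt_def.2 (Nat.lt_add_right y (Nat.lt_succ_self i)))
  obtain ⟨α, ρ, rfl⟩ := exists_skewSum_eq hblocks
  have hα : α (Fin.last i) = Fin.last i := by
    have h := hmax (Fin.castAdd j (α.symm (Fin.last i)))
    rw [Fin.le_def, skewSum_castAdd, skewSum_castAdd, apply_symm_apply] at h
    exact le_antisymm (Fin.le_last _) (Fin.le_def.2 (by omega))
  obtain ⟨σ, rfl⟩ := exists_appendTop_eq hα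
  exact ⟨σ, ρ, rfl⟩

theorem skewSum_appendTop_le (σ : Perm (Fin i)) (ρ : Perm (Fin j)) (q : Fin (i + 1 + j)) :
    skewSum (appendTop σ) ρ q ≤ skewSum (appendTop σ) ρ (Fin.castAdd j (Fin.last i)) := by
  rw [Fin.le_def, skewSum_castAdd, appendTop_last, Fin.val_last]
  omega

theorem contains_p132_skewSum_appendTop_iff {σ : Perm (Fin i)} {ρ : Perm (Fin j)} :
    Contains p132 (skewSum (appendTop σ) ρ) ↔ Contains p132 σ ∨ Contains p132 ρ := by
  have hlast : p132 (Fin.last 2) ≠ Fin.last 2 := by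
    change (1 : Fin 3) ≠ 2
    decide
  rw [skewIndecomposable_p132.contains_skewSum_iff, contains_appendTop_iff_of_last_ne hlast]

theorem contains_appendTop_skewSum_appendTop_iff {k : ℕ} {τ : Perm (Fin k)} {σ : Perm (Fin i)}
    {ρ : Perm (Fin j)} :
    Contains (appendTop τ) (skewSum (appendTop σ) ρ) ↔
      Contains τ σ ∨ Contains (appendTop τ) ρ := by
  rw [(skewIndecomposable_appendTop τ).contains_skewSum_iff, contains_appendTop_appendTop_iff]

end Decomposition

section Counting

/-- A permutation as a pattern, bundled with its length. -/
def Pattern.ofPerm {k : ℕ} (τ : Perm (Fin k)) : Pattern := ⟨k, τ⟩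

/-- The pattern `τ⁺` obtained from `τ` by appending a new largest letter, for patterns of any
length. -/
noncomputable def Pattern.appendTop (p : Pattern) : Pattern := ofPerm (_root_.appendTop p.2)

section AvoidsSet

variable {k n : ℕ} {π : Perm (Fin n)}

theorem avoidsSet_insert_ofPerm {τ : Perm (Fin k)} {T : Set Pattern} :
    AvoidsSet (insert (Pattern.ofPerm τ) T) π ↔ ¬ Contains τ π ∧ AvoidsSet T π :=
  Set.forall_mem_insert

theorem avoidsSet_image_ofPerm {S : Set (Perm (Fin k))} :
    AvoidsSet (Pattern.ofPerm '' S) π ↔ ∀ τ ∈ S, ¬ Contains τ π :=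
  Set.forall_mem_image

theorem avoidsSet_image_appendTop {T : Set Pattern} :
    AvoidsSet (Pattern.appendTop '' T) π ↔ ∀ p ∈ T, ¬ Contains (appendTop p.2) π :=
  Set.forall_mem_image

theorem avoidsSet_image_appendTop_image_ofPerm {S : Set (Perm (Fin k))} :
    AvoidsSet (Pattern.appendTop '' (Pattern.ofPerm '' S)) π ↔
      ∀ τ ∈ S, ¬ Contains (appendTop τ) π :=
  avoidsSet_image_appendTop.trans Set.forall_mem_image

end AvoidsSet

theorem avoidCount_zero {T : Set Pattern} (hT : ∀ p ∈ T, p.1 ≠ 0) : avoidCount T 0 = 1 := by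
  have havoids (π : Perm (Fin 0)) : AvoidsSet T π := fun p hp ⟨f, _⟩ =>
    (f ⟨0, Nat.pos_of_ne_zero (hT p hp)⟩).elim0
  simp [avoidCount, havoids]

theorem avoidCount_succ_eq_sum_card_max_at (T : Set Pattern) (n : ℕ) :
    avoidCount T (n + 1) =
      ∑ p : Fin (n + 1), Nat.card {π : Perm (Fin (n + 1)) // AvoidsSet T π ∧ ∀ q, π q ≤ π p} := by
  have hmax (π : Perm (Fin (n + 1))) (p) : π.symm (Fin.last n) = p ↔ ∀ q, π q ≤ π p := by
    refine ⟨?_, fun h => (symm_apply_eq π).2 <| le_antisymm ?_ (Fin.le_last _)⟩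
    · rintro rfl q
      simpa using Fin.le_last (π q)
    · simpa using h (π.symm (Fin.last n))
  let maxPos (π : {π : Perm (Fin (n + 1)) // AvoidsSet T π}) := π.1.symm (Fin.last n)
  rw [avoidCount, ← Nat.card_congr (sigmaFiberEquiv maxPos), Nat.card_sigma]
  refine Finset.sum_congr rfl fun p _ => Nat.card_congr ?_
  exact (subtypeSubtypeEquivSubtypeInter _ fun π => π.symm (Fin.last n) = p).trans
    (subtypeEquivRight fun π => and_congr_right fun _ => hmax π p)

variable {T : Set Pattern}

theorem avoidsSet_skewSum_appendTop_iff {i j : ℕ} {σ : Perm (Fin i)} {ρ : Perm (Fin j)} :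
    AvoidsSet (insert (Pattern.ofPerm p132) (Pattern.appendTop '' T)) (skewSum (appendTop σ) ρ) ↔
      AvoidsSet (insert (Pattern.ofPerm p132) T) σ ∧
        AvoidsSet (insert (Pattern.ofPerm p132) (Pattern.appendTop '' T)) ρ := by
  simp only [avoidsSet_insert_ofPerm, avoidsSet_image_appendTop,
    contains_p132_skewSum_appendTop_iff, contains_appendTop_skewSum_appendTop_iff, not_or,
    forall₂_and]
  exact and_and_and_comm

theorem card_avoidsSet_max_at {n i j : ℕ} (hn : n = i + 1 + j) {p : Fin n} (hp : (p : ℕ) = i) :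
    Nat.card {π : Perm (Fin n) //
        AvoidsSet (insert (Pattern.ofPerm p132) (Pattern.appendTop '' T)) π ∧ ∀ q, π q ≤ π p} =
      avoidCount (insert (Pattern.ofPerm p132) T) i *
        avoidCount (insert (Pattern.ofPerm p132) (Pattern.appendTop '' T)) j := by
  subst hn
  obtain rfl : p = Fin.castAdd j (Fin.last i) := Fin.ext hp
  rw [avoidCount, avoidCount, ← Nat.card_prod]
  refine (Nat.card_eq_of_bijective (fun x => ⟨skewSum (appendTop x.1.1) x.2.1,
    avoidsSet_skewSum_appendTop_iff.2 ⟨x.1.2, x.2.2⟩, skewSum_appendTop_le x.1.1 x.2.1⟩)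
    ⟨?_, ?_⟩).symm
  · rintro ⟨σ, ρ⟩ ⟨σ', ρ'⟩ h
    obtain ⟨hσ, hρ⟩ := skewSum_inj.1 (congrArg Subtype.val h)
    exact Prod.ext (Subtype.ext (appendTop_injective hσ)) (Subtype.ext hρ)
  · rintro ⟨π, hπ, hmax⟩
    obtain ⟨σ, ρ, rfl⟩ := exists_skewSum_appendTop_eq (avoidsSet_insert_ofPerm.1 hπ).1 hmax
    obtain ⟨hσ, hρ⟩ := avoidsSet_skewSum_appendTop_iff.1 hπ
    exact ⟨(⟨σ, hσ⟩, ⟨ρ, hρ⟩), rfl⟩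

theorem avoidCount_p132_appendTop_succ (T : Set Pattern) (n : ℕ) :
    avoidCount (insert (Pattern.ofPerm p132) (Pattern.appendTop '' T)) (n + 1) =
      ∑ x ∈ Finset.HasAntidiagonal.antidiagonal n, avoidCount (insert (Pattern.ofPerm p132) T) x.1 *
        avoidCount (insert (Pattern.ofPerm p132) (Pattern.appendTop '' T)) x.2 := by
  rw [avoidCount_succ_eq_sum_card_max_at, Finset.Nat.sum_antidiagonal_eq_sum_range_succ_mk,
    Finset.sum_range]
  exact Finset.sum_congr rfl fun p _ => card_avoidsSet_max_at (by omega) rfl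

/-- The generating function `F_T(X) = ∑ₙ f_T(n) Xⁿ` of the permutations avoiding every pattern
in `T`, with coefficients in an arbitrary semiring. -/
noncomputable def avoidSeries (R : Type*) [Semiring R] (T : Set Pattern) : R⟦X⟧ :=
  PowerSeries.mk fun n => (avoidCount T n : R)

theorem avoidSeries_p132_appendTop (R : Type*) [Semiring R] (T : Set Pattern) :
    avoidSeries R (insert (Pattern.ofPerm p132) (Pattern.appendTop '' T)) =
      1 + X * (avoidSeries R (insert (Pattern.ofPerm p132) T) *
        avoidSeries R (insert (Pattern.ofPerm p132) (Pattern.appendTop '' T))) := by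
  ext (_ | n)
  · have hne : ∀ p ∈ insert (Pattern.ofPerm p132) (Pattern.appendTop '' T), p.1 ≠ 0 := by
      rintro _ (rfl | ⟨p, -, rfl⟩)
      exacts [three_ne_zero, p.1.succ_ne_zero]
    simp [avoidSeries, avoidCount_zero hne]
  · rw [map_add, coeff_succ_X_mul, coeff_mul]
    simp [avoidSeries, coeff_one, avoidCount_p132_appendTop_succ]

end Counting

theorem stmt6_general (R : Type*) [CommRing R] (T : Set Pattern) :
    avoidSeries R (insert (Pattern.ofPerm p132) (Pattern.appendTop '' T)) *
      (1 - X * avoidSeries R (insert (Pattern.ofPerm p132) T)) = 1 := by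
  linear_combination avoidSeries_p132_appendTop R T

/-- For `k = m + 1 ≥ 2` and `T'` a finite set of patterns in `S_{k-1}`,
let `T = {τ'⁺ : τ' ∈ T'}` where `τ'⁺` appends the letter `k` at the end. Then the
generating functions for `132`-avoiding permutations that also avoid `T` (resp. `T'`)
satisfy `F_T(X)·(1 − X·F_{T'}(X)) = 1`. -/
theorem stmt6 (m : ℕ) (hm : 1 ≤ m) (T' : Finset (Equiv.Perm (Fin m))) :
    (PowerSeries.mk fun n => ((Nat.card {π : Equiv.Perm (Fin n) //
        ¬ Contains p132 π ∧ ∀ τ' ∈ T', ¬ Contains (appendTop τ') π} : ℕ) : ℚ))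
      * (1 - PowerSeries.X * PowerSeries.mk fun n =>
          ((Nat.card {π : Equiv.Perm (Fin n) //
            ¬ Contains p132 π ∧ ∀ τ' ∈ T', ¬ Contains τ' π} : ℕ) : ℚ)) = 1 := by
  simpa only [avoidSeries, avoidCount, avoidsSet_insert_ofPerm, avoidsSet_image_ofPerm,
    avoidsSet_image_appendTop_image_ofPerm, Finset.mem_coe]
    using stmt6_general ℚ (Pattern.ofPerm '' (T' : Set (Equiv.Perm (Fin m))))
end

section
/- Let F(X) = Σ_{n≥0} |{π ∈ S_n : π avoids the patterns 132, 1234 and 2134}|·Xⁿ ∈ ℚ⟦X⟧. Then (1 − 2X − X²)·F(X) = 1 − X − X². -/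
/-- The pattern `1234 ∈ S₄` (the identity). -/
noncomputable def p1234 : Equiv.Perm (Fin 4) := Equiv.ofBijective ![0, 1, 2, 3] (by decide)

/-- The pattern `2134 ∈ S₄` (zero-indexed: `0↦1, 1↦0, 2↦2, 3↦3`). -/
noncomputable def p2134 : Equiv.Perm (Fin 4) := Equiv.ofBijective ![1, 0, 2, 3] (by decide)

/-!
Write a permutation as its first value `p` followed by a permutation `σ` of the remaining values.
Prepending `p` to `σ` keeps 132, 1234 and 2134 avoided exactly when every non-maximal value `v` of
`σ` above `p` is the first entry of `σ`: if the maximum of `σ` comes before `v`, then `p`, the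
maximum and `v` form a 132; if it comes after `v`, then `p`, any entry before `v`, `v` itself and
the maximum contain one of the three patterns. So `p` is the largest or the second largest value,
with `σ` arbitrary, or the third largest value, with the second largest value right after it.
The number `aₙ` of avoiders therefore satisfies `aₙ₊₃ = 2 aₙ₊₂ + aₙ₊₁`.
-/

section Patterns

open Equiv

variable {k n : ℕ}

theorem isOccurrence_iff_strictMono (τ : Perm (Fin k)) (π : Perm (Fin n)) (f : Fin k → Fin n) :
    IsOccurrence τ π f ↔ StrictMono f ∧ StrictMono (π ∘ f ∘ τ.symm) := by
  refine and_congr_right fun _ => ⟨fun h a b hab => ?_, fun h a b => ?_⟩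
  · exact (h _ _).1 (by simpa using hab)
  · simpa using (h.lt_iff_lt (a := τ a) (b := τ b)).symm

theorem not_contains_of_lt (τ : Perm (Fin k)) (π : Perm (Fin n)) (h : n < k) : ¬ Contains τ π := by
  rintro ⟨f, hf, -⟩
  exact h.not_ge (by simpa using Fintype.card_le_of_injective f hf.injective)

theorem contains_p132_iff (π : Perm (Fin n)) :
    Contains p132 π ↔ ∃ i j k, (i < j ∧ j < k) ∧ π i < π k ∧ π k < π j := by
  have h0 : p132.symm 0 = 0 := p132.symm_apply_eq.2 rfl
  have h1 : p132.symm 1 = 2 := p132.symm_apply_eq.2 rfl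
  have h2 : p132.symm 2 = 1 := p132.symm_apply_eq.2 rfl
  refine (FinVec.exists_iff _).symm.trans ?_
  simp [FinVec.Exists, isOccurrence_iff_strictMono, Fin.strictMono_iff_lt_succ,
    Fin.forall_fin_succ, h0, h1, h2]

theorem contains_p1234_iff (π : Perm (Fin n)) :
    Contains p1234 π ↔
      ∃ i j k l, (i < j ∧ j < k ∧ k < l) ∧ π i < π j ∧ π j < π k ∧ π k < π l := by
  have h0 : p1234.symm 0 = 0 := p1234.symm_apply_eq.2 rfl
  have h1 : p1234.symm 1 = 1 := p1234.symm_apply_eq.2 rfl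
  have h2 : p1234.symm 2 = 2 := p1234.symm_apply_eq.2 rfl
  have h3 : p1234.symm 3 = 3 := p1234.symm_apply_eq.2 rfl
  refine (FinVec.exists_iff _).symm.trans ?_
  simp [FinVec.Exists, isOccurrence_iff_strictMono, Fin.strictMono_iff_lt_succ,
    Fin.forall_fin_succ, h0, h1, h2, h3]

theorem contains_p2134_iff (π : Perm (Fin n)) :
    Contains p2134 π ↔
      ∃ i j k l, (i < j ∧ j < k ∧ k < l) ∧ π j < π i ∧ π i < π k ∧ π k < π l := by
  have h0 : p2134.symm 0 = 1 := p2134.symm_apply_eq.2 rfl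
  have h1 : p2134.symm 1 = 0 := p2134.symm_apply_eq.2 rfl
  have h2 : p2134.symm 2 = 2 := p2134.symm_apply_eq.2 rfl
  have h3 : p2134.symm 3 = 3 := p2134.symm_apply_eq.2 rfl
  refine (FinVec.exists_iff _).symm.trans ?_
  simp [FinVec.Exists, isOccurrence_iff_strictMono, Fin.strictMono_iff_lt_succ,
    Fin.forall_fin_succ, h0, h1, h2, h3]

theorem contains_p1234_or_p2134_iff (π : Perm (Fin n)) :
    Contains p1234 π ∨ Contains p2134 π ↔
      ∃ i j k l, (i < j ∧ j < k ∧ k < l) ∧ π i < π k ∧ π j < π k ∧ π k < π l := by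
  rw [contains_p1234_iff, contains_p2134_iff]
  constructor
  · rintro (⟨i, j, k, l, hlt, hij, hjk, hkl⟩ | ⟨i, j, k, l, hlt, hji, hik, hkl⟩)
    · exact ⟨i, j, k, l, hlt, hij.trans hjk, hjk, hkl⟩
    · exact ⟨i, j, k, l, hlt, hik, hji.trans hik, hkl⟩
  · rintro ⟨i, j, k, l, hlt, hik, hjk, hkl⟩
    rcases lt_or_gt_of_ne (π.injective.ne hlt.1.ne) with hij | hji
    · exact .inl ⟨i, j, k, l, hlt, hij, hjk, hkl⟩
    · exact .inr ⟨i, j, k, l, hlt, hji, hik, hkl⟩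

end Patterns

section Prepend

open Equiv

variable {n : ℕ}

/-- The permutation whose first value is `p` and whose remaining values are those of `σ`, in the
same relative order, with the values `≥ p` raised by one to make room for `p`. -/
def prepend (p : Fin (n + 1)) (σ : Perm (Fin n)) : Perm (Fin (n + 1)) :=
  (finSuccEquiv n).trans ((optionCongr σ).trans (finSuccEquiv' p).symm)

@[simp]
theorem prepend_zero (p : Fin (n + 1)) (σ : Perm (Fin n)) : prepend p σ 0 = p := by
  simp [prepend]

@[simp]
theorem prepend_succ (p : Fin (n + 1)) (σ : Perm (Fin n)) (i : Fin n) :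
    prepend p σ i.succ = p.succAbove (σ i) := by
  simp [prepend]

theorem prepend_right_injective (p : Fin (n + 1)) : Function.Injective (prepend p) := by
  intro σ τ h
  ext1 i
  simpa using DFunLike.congr_fun h i.succ

theorem exists_prepend_eq (π : Perm (Fin (n + 1))) : ∃ σ, prepend (π 0) σ = π := by
  have hne : ∀ i : Fin n, π i.succ ≠ π 0 := fun i => π.injective.ne i.succ_ne_zero
  choose f hf using fun i => Fin.exists_succAbove_eq (hne i)
  have hf_inj : Function.Injective f := fun i j hij =>
    Fin.succ_injective n (π.injective (by rw [← hf, ← hf, hij]))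
  refine ⟨ofBijective f (Finite.injective_iff_bijective.1 hf_inj), ?_⟩
  ext1 i
  cases i using Fin.cases with
  | zero => exact prepend_zero _ _
  | succ i => simp [hf]

theorem card_apply_zero_eq (P : Perm (Fin (n + 1)) → Prop) (p : Fin (n + 1)) :
    Nat.card {π // P π ∧ π 0 = p} = Nat.card {σ // P (prepend p σ)} := by
  symm
  refine Nat.card_eq_of_bijective
    (fun σ => ⟨prepend p σ.1, σ.2, prepend_zero p σ.1⟩) ⟨fun σ τ h => ?_, ?_⟩
  · exact Subtype.ext (prepend_right_injective p (congrArg Subtype.val h))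
  · rintro ⟨π, hπ, rfl⟩
    obtain ⟨σ, hσ⟩ := exists_prepend_eq π
    exact ⟨⟨σ, hσ.symm ▸ hπ⟩, Subtype.ext hσ⟩

theorem card_eq_sum_card_prepend (P : Perm (Fin (n + 1)) → Prop) :
    Nat.card {π // P π} = ∑ p, Nat.card {σ // P (prepend p σ)} := by
  rw [← Nat.card_congr (sigmaFiberEquiv fun π : {π // P π} => π.1 0), Nat.card_sigma]
  refine Finset.sum_congr rfl fun p _ => ?_
  rw [← card_apply_zero_eq, ← Nat.card_congr (subtypeSubtypeEquivSubtypeInter P (· 0 = p))]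

theorem contains_p132_prepend_iff (p : Fin (n + 1)) (σ : Perm (Fin n)) :
    Contains p132 (prepend p σ) ↔
      Contains p132 σ ∨ ∃ j k, j < k ∧ p ≤ (σ k).castSucc ∧ σ k < σ j := by
  simp [contains_p132_iff, Fin.exists_fin_succ, Fin.lt_succAbove_iff_le_castSucc, or_comm]

theorem contains_p1234_or_p2134_prepend_iff (p : Fin (n + 1)) (σ : Perm (Fin n)) :
    Contains p1234 (prepend p σ) ∨ Contains p2134 (prepend p σ) ↔
      (Contains p1234 σ ∨ Contains p2134 σ) ∨
        ∃ j k l, (j < k ∧ k < l) ∧ p ≤ (σ k).castSucc ∧ σ j < σ k ∧ σ k < σ l := by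
  rw [or_comm (b := ∃ j k l, _)]
  simp [contains_p1234_or_p2134_iff, Fin.exists_fin_succ, Fin.lt_succAbove_iff_le_castSucc]

end Prepend

section Avoiders

open Equiv

variable {n : ℕ}

/-- Membership in the class of permutations avoiding 132, 1234 and 2134. -/
def IsAvoider (π : Perm (Fin n)) : Prop :=
  ¬ Contains p132 π ∧ ¬ Contains p1234 π ∧ ¬ Contains p2134 π

/-- The number of permutations of an `n`-element set avoiding 132, 1234 and 2134, that is, the
coefficient of `Xⁿ` in the generating function. -/
noncomputable def avoiderCount (n : ℕ) : ℕ := Nat.card {π : Perm (Fin n) // IsAvoider π}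

theorem isAvoider_prepend_iff_forall_ne_zero (p : Fin (n + 2)) (σ : Perm (Fin (n + 1))) :
    IsAvoider (prepend p σ) ↔
      IsAvoider σ ∧ ∀ k ≠ 0, p ≤ (σ k).castSucc → σ k = Fin.last n := by
  simp only [IsAvoider, ← not_or, contains_p132_prepend_iff, contains_p1234_or_p2134_prepend_iff]
  constructor
  · intro h
    refine ⟨fun hσ => h (hσ.imp .inl .inl), fun k hk hpk => ?_⟩
    by_contra hne
    obtain ⟨m, hm⟩ := σ.surjective (Fin.last n)
    have hkm : σ k < σ m := hm ▸ Fin.lt_last_iff_ne_last.2 hne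
    rcases lt_or_gt_of_ne (show m ≠ k by rintro rfl; exact hne hm) with hmk | hmk
    · exact h (.inl (.inr ⟨m, k, hmk, hpk, hkm⟩))
    · have h0k : 0 < k := Fin.pos_iff_ne_zero.2 hk
      rcases lt_or_gt_of_ne (σ.injective.ne hk) with hlt | hgt
      · exact h (.inl (.inr ⟨0, k, h0k, hpk, hlt⟩))
      · exact h (.inr (.inr ⟨0, k, m, ⟨h0k, hmk⟩, hpk, hgt, hkm⟩))
  · rintro ⟨hσ, hlast⟩ ((h | ⟨j, k, hjk, hpk, hkj⟩) | h | ⟨j, k, l, ⟨hjk, -⟩, hpk, -, hkl⟩)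
    · exact hσ (.inl h)
    · exact hkj.not_ge (hlast k (Fin.ne_zero_of_lt hjk) hpk ▸ Fin.le_last _)
    · exact hσ (.inr h)
    · exact hkl.not_ge (hlast k (Fin.ne_zero_of_lt hjk) hpk ▸ Fin.le_last _)

theorem isAvoider_prepend_iff (p : Fin (n + 2)) (σ : Perm (Fin (n + 1))) :
    IsAvoider (prepend p σ) ↔
      IsAvoider σ ∧ ∀ v : Fin n, p ≤ v.castSucc.castSucc → σ 0 = v.castSucc := by
  rw [isAvoider_prepend_iff_forall_ne_zero]
  refine and_congr_right fun _ => ⟨fun h v hv => ?_, fun h k hk hpk => ?_⟩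
  · obtain ⟨k, hk⟩ := σ.surjective v.castSucc
    by_contra hne
    have hk0 : k ≠ 0 := by rintro rfl; exact hne hk
    exact v.castSucc_ne_last (hk ▸ h k hk0 (hk.symm ▸ hv))
  · by_contra hne
    obtain ⟨v, hv⟩ := Fin.exists_castSucc_eq.2 hne
    exact hk (σ.injective ((h v (hv.symm ▸ hpk)).trans hv)).symm

theorem isAvoider_prepend_last (σ : Perm (Fin (n + 1))) :
    IsAvoider (prepend (Fin.last (n + 1)) σ) ↔ IsAvoider σ := by
  simp [isAvoider_prepend_iff]

theorem isAvoider_prepend_castSucc_last (σ : Perm (Fin (n + 1))) :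
    IsAvoider (prepend (Fin.last n).castSucc σ) ↔ IsAvoider σ := by
  simp [isAvoider_prepend_iff]

theorem isAvoider_prepend_castSucc_castSucc_last (σ : Perm (Fin (n + 2))) :
    IsAvoider (prepend (Fin.last n).castSucc.castSucc σ) ↔
      IsAvoider σ ∧ σ 0 = (Fin.last n).castSucc := by
  simp [isAvoider_prepend_iff]

theorem not_isAvoider_prepend_castSucc_castSucc_castSucc (q : Fin n) (σ : Perm (Fin (n + 2))) :
    ¬ IsAvoider (prepend q.castSucc.castSucc.castSucc σ) := by
  rw [isAvoider_prepend_iff]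
  rintro ⟨-, h⟩
  have h_pred : σ 0 = q.castSucc.castSucc := h q.castSucc le_rfl
  have h_last : σ 0 = (Fin.last n).castSucc := h (Fin.last n) (by simp [Fin.le_last])
  exact q.castSucc_lt_last.ne (Fin.castSucc_injective _ (h_pred.symm.trans h_last))

theorem avoiderCount_add_three (n : ℕ) :
    avoiderCount (n + 3) = 2 * avoiderCount (n + 2) + avoiderCount (n + 1) := by
  have h_third : Nat.card {σ : Perm (Fin (n + 2)) // IsAvoider σ ∧ σ 0 = (Fin.last n).castSucc} =
      avoiderCount (n + 1) := by
    simp only [card_apply_zero_eq, isAvoider_prepend_castSucc_last, avoiderCount]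
  calc avoiderCount (n + 3)
    _ = ∑ p, Nat.card {σ : Perm (Fin (n + 2)) // IsAvoider (prepend p σ)} :=
      card_eq_sum_card_prepend IsAvoider
    _ = avoiderCount (n + 1) + avoiderCount (n + 2) + avoiderCount (n + 2) := by
      simp [Fin.sum_univ_castSucc, not_isAvoider_prepend_castSucc_castSucc_castSucc,
        isAvoider_prepend_castSucc_castSucc_last, isAvoider_prepend_castSucc_last,
        isAvoider_prepend_last, h_third, avoiderCount]
    _ = 2 * avoiderCount (n + 2) + avoiderCount (n + 1) := by ring

theorem avoiderCount_eq_factorial (hn : n ≤ 2) : avoiderCount n = n.factorial := by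
  have h (π : Perm (Fin n)) : IsAvoider π :=
    ⟨not_contains_of_lt _ _ (by lia), not_contains_of_lt _ _ (by lia),
      not_contains_of_lt _ _ (by lia)⟩
  rw [avoiderCount, Nat.card_congr (subtypeUnivEquiv h), Nat.card_perm, Nat.card_fin]

end Avoiders

section LinearRecurrence

open PowerSeries

theorem one_sub_sub_mul_mk_of_recurrence {R : Type*} [CommRing R] (b c : R) (a : ℕ → R)
    (h : ∀ n, a (n + 3) = b * a (n + 2) + c * a (n + 1)) :
    (1 - C b * X - C c * X ^ 2) * mk a =
      C (a 0) + C (a 1 - b * a 0) * X + C (a 2 - b * a 1 - c * a 0) * X ^ 2 := by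
  ext n
  rcases n with _ | _ | _ | n <;>
    simp [sub_mul, mul_assoc, pow_two, coeff_succ_X_mul, coeff_X, coeff_C, h]

end LinearRecurrence

/-- The generating function `F` for permutations avoiding `132`, `1234`
and `2134` satisfies `(1 − 2X − X²)·F = 1 − X − X²`. -/
theorem stmt12 :
    ((1 : PowerSeries ℚ) - 2 * PowerSeries.X - PowerSeries.X ^ 2)
      * (PowerSeries.mk fun n => ((Nat.card {π : Equiv.Perm (Fin n) //
          ¬ Contains p132 π ∧ ¬ Contains p1234 π ∧ ¬ Contains p2134 π} : ℕ) : ℚ))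
      = 1 - PowerSeries.X - PowerSeries.X ^ 2 := by
  have h0 : avoiderCount 0 = 1 := avoiderCount_eq_factorial (by norm_num)
  have h1 : avoiderCount 1 = 1 := avoiderCount_eq_factorial (by norm_num)
  have h2 : avoiderCount 2 = 2 := avoiderCount_eq_factorial le_rfl
  have h_rec (n : ℕ) : (avoiderCount (n + 3) : ℚ) =
      2 * avoiderCount (n + 2) + 1 * avoiderCount (n + 1) := by
    simp [avoiderCount_add_three]
  calc
    _ = (1 - PowerSeries.C 2 * PowerSeries.X - PowerSeries.C 1 * PowerSeries.X ^ 2) *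
          PowerSeries.mk fun n => (avoiderCount n : ℚ) := by
      rw [map_one, one_mul, map_ofNat]
      rfl
    _ = _ := one_sub_sub_mul_mk_of_recurrence 2 1 _ h_rec
    _ = 1 - PowerSeries.X - PowerSeries.X ^ 2 := by
      norm_num [h0, h1, h2, sub_eq_add_neg]
end
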